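/- Σ_{n ≤ x} (Ω(n) − ω(n)) = x·Σ_p 1/(p(p−1)) + O(√x·log x) as x → ∞, where the sum Σ_p is over all primes p. -/

import Mathlib

open Filter Real
open scoped Classical

/-!
For a prime `p`, summing `v_p(n) - [p ∣ n]` over `n ≤ N` gives `v_p(N!) - ⌊N/p⌋ = v_p(⌊N/p⌋!)`,
which vanishes unless `p ≤ √N`. By Legendre's formula `v_p(M!) = M/(p-1) + O(log M)`, so each of
the at most `√x` relevant primes contributes `x/(p(p-1)) + O(log x)`. Completing the sum of
`1/(p(p-1))` over `p ≤ √x` to all primes costs `x · O(1/√x)`, by telescoping.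
-/

open scoped Nat

lemma primeFactors_subset_primesLE {n N : ℕ} (h : n ≤ N) : n.primeFactors ⊆ N.primesLE :=
  fun _ hp ↦ Nat.mem_primesLE.2
    ⟨(Nat.le_of_mem_primeFactors hp).trans h, Nat.prime_of_mem_primeFactors hp⟩

lemma length_primeFactorsList_eq_sum_primesLE {n N : ℕ} (h : n ≤ N) :
    n.primeFactorsList.length = ∑ p ∈ N.primesLE, n.factorization p := by
  rw [← ArithmeticFunction.cardFactors_apply, ArithmeticFunction.cardFactors_eq_sum_factorization]
  exact Finsupp.sum_of_support_subset _ (primeFactors_subset_primesLE h) _ fun _ _ ↦ rfl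

lemma card_primeFactors_eq_sum_primesLE {n N : ℕ} (hn : n ≠ 0) (h : n ≤ N) :
    n.primeFactors.card = ∑ p ∈ N.primesLE, if p ∣ n then 1 else 0 := by
  rw [← Finset.card_filter]
  congr 1
  ext p
  rw [Finset.mem_filter, Nat.mem_primesLE, Nat.mem_primeFactors_of_ne_zero hn]
  exact ⟨fun ⟨hp, hpn⟩ ↦ ⟨⟨(Nat.le_of_dvd hn.bot_lt hpn).trans h, hp⟩, hpn⟩,
    fun ⟨⟨_, hp⟩, hpn⟩ ↦ ⟨hp, hpn⟩⟩

lemma sum_Icc_factorization (N p : ℕ) :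
    ∑ n ∈ Finset.Icc 1 N, n.factorization p = (N)!.factorization p := by
  rw [← Finset.prod_Ico_id_eq_factorial, Finset.Ico_add_one_right_eq_Icc,
    Nat.factorization_prod_apply]
  exact fun n hn ↦ Nat.ne_of_gt (Finset.mem_Icc.1 hn).1

lemma sum_length_primeFactorsList (N : ℕ) :
    ∑ n ∈ Finset.Icc 1 N, n.primeFactorsList.length =
      ∑ p ∈ N.primesLE, (N)!.factorization p := by
  calc ∑ n ∈ Finset.Icc 1 N, n.primeFactorsList.length
    _ = ∑ n ∈ Finset.Icc 1 N, ∑ p ∈ N.primesLE, n.factorization p :=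
      Finset.sum_congr rfl fun n hn ↦
        length_primeFactorsList_eq_sum_primesLE (Finset.mem_Icc.1 hn).2
    _ = ∑ p ∈ N.primesLE, (N)!.factorization p := by
      simp only [Finset.sum_comm (s := Finset.Icc 1 N), sum_Icc_factorization]

lemma sum_card_primeFactors (N : ℕ) :
    ∑ n ∈ Finset.Icc 1 N, n.primeFactors.card = ∑ p ∈ N.primesLE, N / p := by
  calc ∑ n ∈ Finset.Icc 1 N, n.primeFactors.card
    _ = ∑ n ∈ Finset.Icc 1 N, ∑ p ∈ N.primesLE, if p ∣ n then 1 else 0 :=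
      Finset.sum_congr rfl fun n hn ↦
        card_primeFactors_eq_sum_primesLE (Nat.ne_of_gt (Finset.mem_Icc.1 hn).1)
          (Finset.mem_Icc.1 hn).2
    _ = ∑ p ∈ N.primesLE, N / p := by
      rw [Finset.sum_comm]
      refine Finset.sum_congr rfl fun p _ ↦ ?_
      rw [← Finset.card_filter, ← Nat.Ioc_filter_dvd_card_eq_div]
      rfl

lemma factorization_factorial_eq_factorization_factorial_div_add {p : ℕ} (hp : p.Prime) (N : ℕ) :
    (N)!.factorization p = (N / p)!.factorization p + N / p := by
  have := Fact.mk hp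
  rw [← Nat.factorization_factorial_mul hp, Nat.factorization_def _ hp, Nat.factorization_def _ hp,
    padicValNat_mul_div_factorial]

lemma factorization_factorial_div_eq_zero_of_sqrt_lt {N p : ℕ} (h : N.sqrt < p) :
    (N / p)!.factorization p = 0 :=
  Nat.factorization_factorial_eq_zero_of_lt <| Nat.div_lt_of_lt_mul (Nat.sqrt_lt.1 h)

lemma sum_length_primeFactorsList_sub_card_primeFactors (N : ℕ) :
    ∑ n ∈ Finset.Icc 1 N, ((n.primeFactorsList.length : ℝ) - n.primeFactors.card) =
      ∑ p ∈ N.sqrt.primesLE, ((N / p)!.factorization p : ℝ) := by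
  have restrict_to_sqrt : ∑ p ∈ N.sqrt.primesLE, ((N / p)!.factorization p : ℝ) =
      ∑ p ∈ N.primesLE, ((N / p)!.factorization p : ℝ) := by
    refine Finset.sum_subset (Nat.primesLE_mono N.sqrt_le_self) fun p hp hps ↦ ?_
    have hlt : N.sqrt < p := by
      by_contra! hle
      exact hps (Nat.mem_primesLE.2 ⟨hle, Nat.prime_of_mem_primesLE hp⟩)
    rw [factorization_factorial_div_eq_zero_of_sqrt_lt hlt, Nat.cast_zero]
  rw [restrict_to_sqrt, Finset.sum_sub_distrib, ← Nat.cast_sum, ← Nat.cast_sum,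
    sum_length_primeFactorsList, sum_card_primeFactors, Nat.cast_sum, Nat.cast_sum,
    ← Finset.sum_sub_distrib]
  refine Finset.sum_congr rfl fun p hp ↦ ?_
  rw [factorization_factorial_eq_factorization_factorial_div_add (Nat.prime_of_mem_primesLE hp),
    Nat.cast_add, add_sub_cancel_right]

lemma sum_digits_le {b : ℕ} (hb : 1 < b) (m : ℕ) :
    (b.digits m).sum ≤ (Nat.log b m + 1) * (b - 1) := by
  have digits_length_le : (b.digits m).length ≤ Nat.log b m + 1 :=
    (Nat.digits_length_le_iff hb m).2 (Nat.lt_pow_succ_log_self hb m)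
  calc (b.digits m).sum
    _ ≤ (b.digits m).length * (b - 1) :=
      List.sum_le_card_nsmul _ _ fun d hd ↦ Nat.le_sub_one_of_lt (Nat.digits_lt_base hb hd)
    _ ≤ (Nat.log b m + 1) * (b - 1) := Nat.mul_le_mul_right _ digits_length_le

lemma factorization_factorial_le_div {p : ℕ} (hp : p.Prime) (m : ℕ) :
    ((m)!.factorization p : ℝ) ≤ m / (p - 1) := by
  calc ((m)!.factorization p : ℝ)
    _ ≤ (m / (p - 1) : ℕ) := mod_cast Nat.factorization_factorial_le_div_pred hp m
    _ ≤ m / (p - 1 : ℕ) := Nat.cast_div_le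
    _ = m / (p - 1) := by rw [Nat.cast_pred hp.pos]

lemma div_sub_log_le_factorization_factorial {p : ℕ} (hp : p.Prime) (m : ℕ) :
    (m : ℝ) / (p - 1) - (Nat.log p m + 1) ≤ (m)!.factorization p := by
  have hp1 : (0 : ℝ) < p - 1 := sub_pos.2 (mod_cast hp.one_lt)
  have legendre : m ≤ (p - 1) * (m)!.factorization p + (Nat.log p m + 1) * (p - 1) := by
    have := Nat.sub_one_mul_factorization_factorial (n := m) hp
    have := sum_digits_le hp.one_lt m
    lia
  have legendre_real :
      (m : ℝ) ≤ (p - 1) * (m)!.factorization p + (Nat.log p m + 1) * (p - 1) := by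
    rw [← Nat.cast_pred hp.pos]
    exact_mod_cast legendre
  rw [sub_le_iff_le_add, div_le_iff₀ hp1]
  linarith

lemma abs_factorization_factorial_floor_div_sub_le {p : ℕ} (hp : p.Prime) {x : ℝ} (hx : 0 ≤ x) :
    |((⌊x⌋₊ / p)!.factorization p : ℝ) - x * (1 / (p * (p - 1)))| ≤ Nat.log 2 ⌊x⌋₊ + 2 := by
  have hp1 : (1 : ℝ) ≤ p - 1 := by linarith [show (2 : ℝ) ≤ p from mod_cast hp.two_le]
  have floor_div : ⌊x⌋₊ / p = ⌊x / p⌋₊ := (Nat.floor_div_natCast x p).symm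
  have main_term : x * (1 / (p * (p - 1))) = x / p / (p - 1) := by
    rw [mul_one_div, div_div]
  have floor_term_le : (⌊x / p⌋₊ : ℝ) / (p - 1) ≤ x / p / (p - 1) := by
    gcongr
    exact Nat.floor_le (by positivity)
  have le_floor_term : x / p / (p - 1) - 1 ≤ (⌊x / p⌋₊ : ℝ) / (p - 1) := by
    calc x / p / (p - 1) - 1
      _ ≤ x / p / (p - 1) - 1 / (p - 1) := by
        gcongr
        exact div_le_one_of_le₀ hp1 (by linarith)
      _ = (x / p - 1) / (p - 1) := (sub_div ..).symm
      _ ≤ ⌊x / p⌋₊ / (p - 1) := by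
        gcongr
        exact (Nat.sub_one_lt_floor _).le
  have log_le : (Nat.log p ⌊x / p⌋₊ : ℝ) ≤ Nat.log 2 ⌊x⌋₊ := by
    rw [← floor_div]
    exact_mod_cast (Nat.log_anti_left one_lt_two hp.two_le).trans
      (Nat.log_mono_right (Nat.div_le_self _ _))
  have upper := factorization_factorial_le_div hp ⌊x / p⌋₊
  have lower := div_sub_log_le_factorization_factorial hp ⌊x / p⌋₊
  rw [floor_div, main_term, abs_le]
  constructor <;> linarith

lemma card_primesLE_le (n : ℕ) : n.primesLE.card ≤ n := by
  rw [Nat.primesLE_eq_filter_Icc_one]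
  simpa using Finset.card_filter_le (Finset.Icc 1 n) Nat.Prime

lemma abs_sum_factorization_factorial_floor_div_sub_le {x : ℝ} (hx : 0 ≤ x) (s : ℕ) :
    |∑ p ∈ s.primesLE, ((⌊x⌋₊ / p)!.factorization p : ℝ) -
        x * ∑ p ∈ s.primesLE, 1 / ((p : ℝ) * (p - 1))| ≤ s * (Nat.log 2 ⌊x⌋₊ + 2) := by
  rw [Finset.mul_sum, ← Finset.sum_sub_distrib]
  calc |∑ p ∈ s.primesLE, (((⌊x⌋₊ / p)!.factorization p : ℝ) - x * (1 / ((p : ℝ) * (p - 1))))|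
    _ ≤ ∑ p ∈ s.primesLE, |((⌊x⌋₊ / p)!.factorization p : ℝ) - x * (1 / ((p : ℝ) * (p - 1)))| :=
      Finset.abs_sum_le_sum_abs _ _
    _ ≤ s.primesLE.card • (Nat.log 2 ⌊x⌋₊ + 2 : ℝ) :=
      Finset.sum_le_card_nsmul _ _ _ fun p hp ↦
        abs_factorization_factorial_floor_div_sub_le (Nat.prime_of_mem_primesLE hp) hx
    _ ≤ s * (Nat.log 2 ⌊x⌋₊ + 2) := by
      rw [nsmul_eq_mul]
      gcongr
      exact card_primesLE_le s

lemma one_div_mul_sub_one_nonneg (n : ℕ) : 0 ≤ 1 / ((n : ℝ) * (n - 1)) := by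
  obtain rfl | hn := n.eq_zero_or_pos
  · simp
  · have : (1 : ℝ) ≤ n := mod_cast hn
    have : (0 : ℝ) ≤ n - 1 := by linarith
    positivity

lemma hasSum_one_div_mul_sub_one_nat_add {k : ℕ} (hk : k ≠ 0) :
    HasSum (fun n : ℕ ↦ 1 / (((n + (k + 1) : ℕ) : ℝ) * ((n + (k + 1) : ℕ) - 1))) (1 / k) := by
  rw [hasSum_iff_tendsto_nat_of_nonneg fun n ↦ one_div_mul_sub_one_nonneg _]
  have telescope (m : ℕ) :
      ∑ n ∈ Finset.range m, 1 / (((n + (k + 1) : ℕ) : ℝ) * ((n + (k + 1) : ℕ) - 1)) =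
        1 / k - 1 / (m + k : ℕ) := by
    have hk' : (k : ℝ) ≠ 0 := mod_cast hk
    induction m with
    | zero => simp
    | succ m ih =>
      rw [Finset.sum_range_succ, ih]
      push_cast
      rw [show (m : ℝ) + (k + 1) - 1 = m + k by ring]
      field_simp
      ring
  simp only [telescope]
  have tendsto_zero : Tendsto (fun m : ℕ ↦ 1 / ((m + k : ℕ) : ℝ)) atTop (nhds 0) :=
    tendsto_one_div_atTop_nhds_zero_nat.comp (tendsto_add_atTop_nat k)
  simpa only [sub_zero] using tendsto_zero.const_sub (1 / (k : ℝ))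

lemma summable_one_div_mul_sub_one : Summable fun n : ℕ ↦ 1 / ((n : ℝ) * (n - 1)) :=
  (summable_nat_add_iff 2).1 (hasSum_one_div_mul_sub_one_nat_add one_ne_zero).summable

lemma abs_sum_filter_range_sub_tsum_subtype_le {f : ℕ → ℝ} (hf : ∀ n, 0 ≤ f n) (hsum : Summable f)
    (P : ℕ → Prop) [DecidablePred P] (k : ℕ) :
    |∑ n ∈ Finset.range k with P n, f n - ∑' n : {n // P n}, f n| ≤ ∑' n, f (n + k) := by
  set g : ℕ → ℝ := {n | P n}.indicator f with hg
  have hg_nonneg (n : ℕ) : 0 ≤ g n := Set.indicator_nonneg (fun n _ ↦ hf n) n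
  have hg_summable : Summable g := hsum.indicator _
  have sum_eq : ∑ n ∈ Finset.range k with P n, f n = ∑ n ∈ Finset.range k, g n := by
    simp only [hg, Finset.sum_filter, Set.indicator_apply, Set.mem_ofPred_eq]
  have tsum_eq : ∑' n : {n // P n}, f n = ∑' n, g n := tsum_subtype {n | P n} f
  rw [sum_eq, tsum_eq, ← hg_summable.sum_add_tsum_nat_add k, sub_add_cancel_left, abs_neg,
    abs_of_nonneg (tsum_nonneg fun n ↦ hg_nonneg _)]
  exact Summable.tsum_le_tsum (fun n ↦ Set.indicator_le_self' (fun _ _ ↦ hf _) _)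
    ((summable_nat_add_iff k).2 hg_summable) ((summable_nat_add_iff k).2 hsum)

lemma abs_sum_primesLE_sub_tsum_primes_le {s : ℕ} (hs : s ≠ 0) :
    |∑ p ∈ s.primesLE, 1 / ((p : ℝ) * (p - 1)) -
        ∑' p : Nat.Primes, 1 / (((p : ℕ) : ℝ) * ((p : ℕ) - 1))| ≤ 1 / s := by
  rw [← (hasSum_one_div_mul_sub_one_nat_add hs).tsum_eq]
  exact abs_sum_filter_range_sub_tsum_subtype_le one_div_mul_sub_one_nonneg
    summable_one_div_mul_sub_one Nat.Prime (s + 1)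

lemma natLog_two_floor_le {x : ℝ} (hx : 1 ≤ x) : (Nat.log 2 ⌊x⌋₊ : ℝ) ≤ 2 * log x := by
  have floor_pos : (0 : ℝ) < ⌊x⌋₊ := mod_cast Nat.floor_pos.2 hx
  calc (Nat.log 2 ⌊x⌋₊ : ℝ)
    _ ≤ logb 2 ⌊x⌋₊ := mod_cast natLog_le_logb ⌊x⌋₊ 2
    _ ≤ logb 2 x := logb_le_logb_of_le one_lt_two floor_pos (Nat.floor_le (by linarith))
    _ = log x / log 2 := rfl
    _ ≤ 2 * log x := by
      rw [div_le_iff₀ (log_pos one_lt_two)]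
      nlinarith [log_two_gt_d9, log_nonneg hx]

lemma natSqrt_floor_le_sqrt {x : ℝ} (hx : 0 ≤ x) : (⌊x⌋₊.sqrt : ℝ) ≤ √x :=
  nat_sqrt_le_real_sqrt.trans (sqrt_le_sqrt (Nat.floor_le hx))

lemma sqrt_le_two_mul_natSqrt_floor {x : ℝ} (hx : 1 ≤ x) : √x ≤ 2 * ⌊x⌋₊.sqrt := by
  have natSqrt_pos : (1 : ℝ) ≤ ⌊x⌋₊.sqrt := mod_cast Nat.sqrt_pos.2 (Nat.floor_pos.2 hx)
  have floor_lt_sq : ((⌊x⌋₊ : ℝ) + 1) ≤ (⌊x⌋₊.sqrt + 1) ^ 2 :=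
    mod_cast Nat.lt_succ_sqrt' ⌊x⌋₊
  calc √x ≤ ⌊x⌋₊.sqrt + 1 :=
        sqrt_le_iff.2 ⟨by positivity, (Nat.lt_floor_add_one x).le.trans floor_lt_sq⟩
    _ ≤ 2 * ⌊x⌋₊.sqrt := by linarith

lemma div_natSqrt_floor_le {x : ℝ} (hx : 1 ≤ x) : x / ⌊x⌋₊.sqrt ≤ 2 * √x := by
  have natSqrt_pos : (0 : ℝ) < ⌊x⌋₊.sqrt := mod_cast Nat.sqrt_pos.2 (Nat.floor_pos.2 hx)
  rw [div_le_iff₀ natSqrt_pos]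
  calc x = √x * √x := (mul_self_sqrt (by linarith)).symm
    _ ≤ √x * (2 * ⌊x⌋₊.sqrt) := by gcongr; exact sqrt_le_two_mul_natSqrt_floor hx
    _ = 2 * √x * ⌊x⌋₊.sqrt := by ring

theorem sum_bigOmega_sub_omega :
    ∃ C > (0:ℝ), ∀ᶠ x : ℝ in atTop,
      |(∑ n ∈ Finset.Icc 1 ⌊x⌋₊,
            ((n.primeFactorsList.length : ℝ) - (n.primeFactors.card : ℝ))) -
          x * ∑' p : Nat.Primes, 1 / (((p : ℕ) : ℝ) * (((p : ℕ) : ℝ) - 1))| ≤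
        C * Real.sqrt x * Real.log x := by
  refine ⟨6, by norm_num, ?_⟩
  filter_upwards [eventually_ge_atTop 1, tendsto_log_atTop.eventually_ge_atTop 1] with x hx hlog
  have hx0 : 0 ≤ x := by linarith
  have hs : ⌊x⌋₊.sqrt ≠ 0 := (Nat.sqrt_pos.2 (Nat.floor_pos.2 hx)).ne'
  rw [sum_length_primeFactorsList_sub_card_primeFactors]
  calc _ ≤ _ := abs_sub_le _ (x * ∑ p ∈ ⌊x⌋₊.sqrt.primesLE, 1 / ((p : ℝ) * (p - 1))) _
    _ ≤ ⌊x⌋₊.sqrt * (Nat.log 2 ⌊x⌋₊ + 2) + x * (1 / ⌊x⌋₊.sqrt) := by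
      rw [← mul_sub, abs_mul, abs_of_nonneg hx0]
      gcongr
      · exact abs_sum_factorization_factorial_floor_div_sub_le hx0 _
      · exact abs_sum_primesLE_sub_tsum_primes_le hs
    _ ≤ √x * (2 * log x + 2) + 2 * √x := by
      rw [mul_one_div]
      gcongr
      · exact natSqrt_floor_le_sqrt hx0
      · exact natLog_two_floor_le hx
      · exact div_natSqrt_floor_le hx
    _ ≤ 6 * √x * log x := by linarith [le_mul_of_one_le_right (sqrt_nonneg x) hlog]
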